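/- Every length-three reflection factorization of a Coxeter element of G4 contains reflections from both conjugacy classes R₁ and R₂. Every reflection factorization of a Coxeter element of G4 of length at least four contains at least three reflections from a single conjugacy class. -/

import Mathlib

noncomputable section

open Matrix Complex

/-- The `i`-th Hurwitz move on length-`k` tuples of group elements. -/
def IsHurwitzMove {G : Type*} [Group G] {k : ℕ} (t t' : Fin k → G) : Prop :=
  ∃ i : ℕ, ∃ h : i + 1 < k,
    t' ⟨i, Nat.lt_of_succ_lt h⟩ = t ⟨i + 1, h⟩ ∧
    t' ⟨i + 1, h⟩ = (t ⟨i + 1, h⟩)⁻¹ * t ⟨i, Nat.lt_of_succ_lt h⟩ * t ⟨i + 1, h⟩ ∧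
    ∀ j : Fin k, (j : ℕ) ≠ i → (j : ℕ) ≠ i + 1 → t' j = t j

/-- Two tuples lie in the same Hurwitz orbit. -/
def SameHurwitzOrbit {G : Type*} [Group G] {k : ℕ} (t t' : Fin k → G) : Prop :=
  Relation.EqvGen IsHurwitzMove t t'

/-- A group element `r` appears (as an entry) in the Hurwitz orbit of the tuple `t`. -/
def Appears {G : Type*} [Group G] {k : ℕ} (r : G) (t : Fin k → G) : Prop :=
  ∃ s : Fin k → G, SameHurwitzOrbit t s ∧ ∃ j, s j = r

/-- A tuple has two consecutive equal entries. -/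
def HasConsecutiveEqualPair {G : Type*} [Group G] {k : ℕ} (t : Fin k → G) : Prop :=
  ∃ i : ℕ, ∃ h : i + 1 < k, t ⟨i, Nat.lt_of_succ_lt h⟩ = t ⟨i + 1, h⟩

/-- Replace the `p`-th entry of a tuple by two consecutive copies of its square. -/
def doubleAt {G : Type*} [Group G] {m : ℕ} (t : Fin m → G) (p : Fin m) : Fin (m + 1) → G :=
  fun j =>
    if h1 : (j : ℕ) < (p : ℕ) then t ⟨j, h1.trans p.isLt⟩
    else if h2 : (j : ℕ) ≤ (p : ℕ) + 1 then (t p) ^ 2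
    else t ⟨(j : ℕ) - 1, by have := j.isLt; omega⟩

/-- `ω = e^(2πi/3)`. -/
def ω : ℂ := Complex.exp (2 * Real.pi * Complex.I / 3)

def AMat : Matrix (Fin 2) (Fin 2) ℂ := !![1, 0; 0, ω]

def BMat : Matrix (Fin 2) (Fin 2) ℂ :=
  !![(ω - ω ^ 2) / 3, ω ^ 2; (-2 * ω ^ 2) / 3, (-ω - 2 * ω ^ 2) / 3]

/-- The complex reflection group G₄ as the subgroup of GL(2,ℂ) generated by `AMat`, `BMat`. -/
def G4 : Subgroup (GL (Fin 2) ℂ) :=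
  Subgroup.closure {g : GL (Fin 2) ℂ |
    (g : Matrix (Fin 2) (Fin 2) ℂ) = AMat ∨ (g : Matrix (Fin 2) (Fin 2) ℂ) = BMat}

/-- The matrix underlying an element of G₄. -/
def mat (t : G4) : Matrix (Fin 2) (Fin 2) ℂ := ((t : GL (Fin 2) ℂ) : Matrix (Fin 2) (Fin 2) ℂ)

/-- A reflection in G₄: a non-identity element with eigenvalue 1. -/
def IsReflection (t : G4) : Prop := t ≠ 1 ∧ (mat t - 1).det = 0

/-- The conjugacy class R₁ of reflections of determinant ω. -/
def R1 : Set G4 := {t | IsReflection t ∧ (mat t).det = ω}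

/-- The conjugacy class R₂ of reflections of determinant ω². -/
def R2 : Set G4 := {t | IsReflection t ∧ (mat t).det = ω ^ 2}

/-- A Coxeter element of G₄: an element with a primitive 6th root of unity as eigenvalue. -/
def IsCoxeter (c : G4) : Prop :=
  ∃ ζ : ℂ, IsPrimitiveRoot ζ 6 ∧ (mat c - ζ • (1 : Matrix (Fin 2) (Fin 2) ℂ)).det = 0

/-- The relators of G₅: a³, b³, abab(baba)⁻¹. -/
def g5Rels : Set (FreeGroup (Fin 2)) :=
  {FreeGroup.of 0 ^ 3, FreeGroup.of 1 ^ 3,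
    FreeGroup.of 0 * FreeGroup.of 1 * FreeGroup.of 0 * FreeGroup.of 1 *
      (FreeGroup.of 1 * FreeGroup.of 0 * FreeGroup.of 1 * FreeGroup.of 0)⁻¹}

/-- The complex reflection group G₅, by its presentation ⟨a,b | a³ = b³ = 1, abab = baba⟩. -/
abbrev G5 := PresentedGroup g5Rels

def ga : G5 := PresentedGroup.of 0
def gb : G5 := PresentedGroup.of 1

/-- The conjugacy class of `a` in G₅. -/
def S1 : Set G5 := {t | IsConj ga t}
/-- The conjugacy class of `b` in G₅. -/
def S2 : Set G5 := {t | IsConj gb t}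
/-- The conjugacy class of `a²` in G₅. -/
def S3 : Set G5 := {t | IsConj (ga ^ 2) t}
/-- The conjugacy class of `b²` in G₅. -/
def S4 : Set G5 := {t | IsConj (gb ^ 2) t}

/-- A reflection in G₅: a conjugate of a, b, a², or b². -/
def IsReflection5 (t : G5) : Prop := t ∈ S1 ∨ t ∈ S2 ∨ t ∈ S3 ∨ t ∈ S4

/-- A Coxeter element of G₅: an element of order 12. -/
def IsCoxeter5 (c : G5) : Prop := orderOf c = 12

/-!
`G4` is an extension of the quaternion group `Q₈` by the cyclic group of order three generated by
`AMat`, and the determinant is a power of `ω` recording the image in the quotient. Hence an element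
of determinant one lies in `Q₈`, where every eigenvalue is a fourth root of unity and only the
identity has eigenvalue `1`. So a Coxeter element does not have determinant one, and a reflection
has determinant `ω` or `ω ^ 2`. For a product of `a` elements of `R1` and `b` elements of `R2` the
determinant is `ω ^ (a + 2 * b)`, which is one precisely when `a ≡ b` modulo three. The class counts
`(3, 0)`, `(0, 3)` and `(2, 2)` are thus excluded; every other pair with `a + b = 3` has both
entries positive, and every other pair with `a + b ≥ 4` has an entry that is at least three.
-/

theorem prod_eq_pow_ncard_mul_pow_ncard {ι M : Type*} [Fintype ι] [CommMonoid M] {f : ι → M}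
    {x y : M} (p : ι → Prop) (hx : ∀ i, p i → f i = x) (hy : ∀ i, ¬ p i → f i = y) :
    ∏ i, f i = x ^ {i | p i}.ncard * y ^ {i | ¬ p i}.ncard := by
  classical
  rw [← Finset.prod_filter_mul_prod_filter_not Finset.univ p,
    Finset.prod_eq_pow_card fun i hi => hx i (Finset.mem_filter.mp hi).2,
    Finset.prod_eq_pow_card fun i hi => hy i (Finset.mem_filter.mp hi).2]
  simp [Set.ncard_eq_toFinset_card']

theorem mem_normalizer_of_isOfFinOrder {G : Type*} [Group G] {H : Subgroup G} {x : G}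
    (hx : IsOfFinOrder x) (hconj : ∀ h ∈ H, x * h * x⁻¹ ∈ H) : x ∈ Subgroup.normalizer H := by
  have pow_conj_mem (n : ℕ) : ∀ h ∈ H, x ^ n * h * (x ^ n)⁻¹ ∈ H := by
    induction n with
    | zero => simp
    | succ n ih =>
      intro h hh
      simpa only [pow_succ', _root_.mul_inv_rev, mul_assoc] using hconj _ (ih h hh)
  obtain ⟨n, hn⟩ : x⁻¹ ∈ Submonoid.powers x :=
    hx.mem_powers_iff_mem_zpowers.mpr (inv_mem (Subgroup.mem_zpowers x))
  replace hn : x ^ n = x⁻¹ := hn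
  refine Subgroup.mem_normalizer_iff.mpr fun h => ⟨hconj h, fun hh => ?_⟩
  simpa [hn, mul_assoc] using pow_conj_mem n _ hh

theorem isPrimitiveRoot_ω : IsPrimitiveRoot ω 3 := by
  simpa [ω] using Complex.isPrimitiveRoot_exp 3 (by norm_num)

theorem ω_sq : ω ^ 2 = -1 - ω := by
  have geom_sum : ∑ i ∈ Finset.range 3, ω ^ i = 0 :=
    isPrimitiveRoot_ω.geom_sum_eq_zero (by norm_num)
  simp only [Finset.sum_range_succ, Finset.sum_range_zero, pow_zero, pow_one] at geom_sum
  linear_combination geom_sum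

theorem ω_ne_ω_sq : ω ≠ ω ^ 2 := fun h => by
  simpa using isPrimitiveRoot_ω.pow_inj (i := 1) (j := 2) (by norm_num) (by norm_num) (by simpa)

section Quaternion

/-- For `u ^ 6 = 1`, the elements of order four of the normal quaternion subgroup of `G4`. They are
indexed by their upper right entry; the factor `u ^ 3 = ±1` makes `u ↦ -u` negate the matrix. -/
def quaternionUnit (u : ℂ) : Matrix (Fin 2) (Fin 2) ℂ :=
  !![u ^ 3 * (1 + 2 * ω) / 3, u; -2 * u ^ 5 / 3, -(u ^ 3 * (1 + 2 * ω)) / 3]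

variable {u v : ℂ}

theorem quaternionUnit_neg (u : ℂ) : quaternionUnit (-u) = -quaternionUnit u := by
  ext i j
  fin_cases i <;> fin_cases j <;> simp [quaternionUnit] <;> ring

theorem det_quaternionUnit_sub_smul_one (hu : u ^ 6 = 1) (z : ℂ) :
    (quaternionUnit u - z • (1 : Matrix (Fin 2) (Fin 2) ℂ)).det = z ^ 2 + 1 := by
  simp only [quaternionUnit, det_fin_two, Matrix.sub_apply, Matrix.smul_apply, of_apply, cons_val',
    cons_val_zero, cons_val_one, cons_val_fin_one, one_apply_eq, ne_eq, zero_ne_one, one_ne_zero,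
    not_false_eq_true, one_apply_ne, smul_eq_mul]
  linear_combination hu - 4 / 9 * u ^ 6 * ω_sq

theorem quaternionUnit_mul_self (hu : u ^ 6 = 1) : quaternionUnit u * quaternionUnit u = -1 := by
  have hω := ω_sq
  ext i j
  fin_cases i <;> fin_cases j <;> simp [quaternionUnit] <;> grind

theorem quaternionUnit_mul_neg (hu : u ^ 6 = 1) :
    quaternionUnit u * quaternionUnit (-u) = 1 := by
  rw [quaternionUnit_neg, mul_neg, quaternionUnit_mul_self hu, neg_neg]

theorem quaternionUnit_mul_of_sq_ne_sq (hu : u ^ 6 = 1) (hv : v ^ 6 = 1) (huv : u ^ 2 ≠ v ^ 2) :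
    ∃ w, w ^ 6 = 1 ∧ quaternionUnit u * quaternionUnit v = quaternionUnit w := by
  have hω := ω_sq
  have hsum : u ^ 4 + u ^ 2 * v ^ 2 + v ^ 4 = 0 := by
    refine (mul_eq_zero.mp ?_).resolve_left (sub_ne_zero.mpr huv)
    linear_combination hu - hv
  -- The upper right entry of the product.
  refine ⟨(1 + 2 * ω) * (u * v * (u ^ 2 - v ^ 2)) / 3, ?_, ?_⟩
  · grind
  · ext i j
    fin_cases i <;> fin_cases j <;> simp [quaternionUnit] <;> grind

theorem AMat_mul_quaternionUnit (u : ℂ) :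
    AMat * quaternionUnit u = quaternionUnit (ω ^ 2 * u) * AMat := by
  have hω := isPrimitiveRoot_ω.pow_eq_one
  ext i j
  fin_cases i <;> fin_cases j <;> simp [AMat, quaternionUnit] <;> grind

theorem BMat_eq_quaternionUnit_mul_AMat : BMat = quaternionUnit ω * AMat := by
  have hω := ω_sq
  ext i j
  fin_cases i <;> fin_cases j <;> simp [AMat, BMat, quaternionUnit] <;> grind

/-- The underlying set of the quaternion group `{±1, ±i, ±j, ±k}`, the derived subgroup of `G4`. -/
def quaternionMatrices : Set (Matrix (Fin 2) (Fin 2) ℂ) :=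
  {1, -1} ∪ quaternionUnit '' {u | u ^ 6 = 1}

variable {M N : Matrix (Fin 2) (Fin 2) ℂ}

theorem quaternionUnit_mem_quaternionMatrices (hu : u ^ 6 = 1) :
    quaternionUnit u ∈ quaternionMatrices :=
  .inr ⟨u, hu, rfl⟩

theorem neg_mem_quaternionMatrices (hM : M ∈ quaternionMatrices) : -M ∈ quaternionMatrices := by
  rcases hM with (rfl | rfl) | ⟨u, hu, rfl⟩
  · exact .inl (.inr rfl)
  · exact .inl (.inl (neg_neg 1))
  · rw [← quaternionUnit_neg]
    exact quaternionUnit_mem_quaternionMatrices ((Even.neg_pow (by decide : Even 6) u).trans hu)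

theorem quaternionUnit_mul_mem_quaternionMatrices (hu : u ^ 6 = 1) (hv : v ^ 6 = 1) :
    quaternionUnit u * quaternionUnit v ∈ quaternionMatrices := by
  by_cases huv : u ^ 2 = v ^ 2
  · obtain rfl | rfl := sq_eq_sq_iff_eq_or_eq_neg.mp huv.symm
    · exact .inl (.inr (quaternionUnit_mul_self hu))
    · exact .inl (.inl (quaternionUnit_mul_neg hu))
  · obtain ⟨w, hw, hmul⟩ := quaternionUnit_mul_of_sq_ne_sq hu hv huv
    exact hmul ▸ quaternionUnit_mem_quaternionMatrices hw

theorem mul_mem_quaternionMatrices (hM : M ∈ quaternionMatrices) (hN : N ∈ quaternionMatrices) :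
    M * N ∈ quaternionMatrices := by
  rcases hM with (rfl | rfl) | ⟨u, hu, rfl⟩
  · rwa [one_mul]
  · rw [neg_one_mul]
    exact neg_mem_quaternionMatrices hN
  rcases hN with (rfl | rfl) | ⟨v, hv, rfl⟩
  · rw [mul_one]
    exact quaternionUnit_mem_quaternionMatrices hu
  · rw [mul_neg_one]
    exact neg_mem_quaternionMatrices (quaternionUnit_mem_quaternionMatrices hu)
  · exact quaternionUnit_mul_mem_quaternionMatrices hu hv

theorem exists_mul_eq_one_of_mem_quaternionMatrices (hM : M ∈ quaternionMatrices) :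
    ∃ N ∈ quaternionMatrices, M * N = 1 := by
  rcases hM with (rfl | rfl) | ⟨u, hu, rfl⟩
  · exact ⟨1, .inl (.inl rfl), one_mul 1⟩
  · exact ⟨-1, .inl (.inr rfl), by rw [neg_one_mul, neg_neg]⟩
  · exact ⟨-quaternionUnit u,
      neg_mem_quaternionMatrices (quaternionUnit_mem_quaternionMatrices hu),
      by rw [mul_neg, quaternionUnit_mul_self hu, neg_neg]⟩

theorem det_of_mem_quaternionMatrices (hM : M ∈ quaternionMatrices) : M.det = 1 := by
  rcases hM with (rfl | rfl) | ⟨u, hu, rfl⟩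
  · exact det_one
  · simp [det_neg]
  · simpa using det_quaternionUnit_sub_smul_one hu 0

theorem eigenvalue_pow_four_eq_one_of_mem_quaternionMatrices (hM : M ∈ quaternionMatrices) {z : ℂ}
    (hz : (M - z • (1 : Matrix (Fin 2) (Fin 2) ℂ)).det = 0) : z ^ 4 = 1 := by
  rcases hM with (rfl | rfl) | ⟨u, hu, rfl⟩
  · have hz_one : 1 - z = 0 := by simpa [det_fin_two] using hz
    rw [← sub_eq_zero.mp hz_one, one_pow]
  · have hz_neg_one : -1 - z = 0 := by simpa [det_fin_two] using hz
    rw [← sub_eq_zero.mp hz_neg_one]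
    norm_num
  · rw [det_quaternionUnit_sub_smul_one hu] at hz
    linear_combination (z ^ 2 - 1) * hz

theorem eq_one_of_mem_quaternionMatrices_of_det_sub_one_eq_zero (hM : M ∈ quaternionMatrices)
    (h : (M - 1).det = 0) : M = 1 := by
  rcases hM with (rfl | rfl) | ⟨u, hu, rfl⟩
  · rfl
  · rw [show (-1 - 1 : Matrix (Fin 2) (Fin 2) ℂ) = (-2 : ℂ) • 1 by module, det_smul] at h
    norm_num at h
  · have := det_quaternionUnit_sub_smul_one hu 1
    rw [one_smul, h] at this
    norm_num at this

/-- The quaternion group of order eight as a subgroup of `GL (Fin 2) ℂ`. -/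
def quaternionSubgroup : Subgroup (GL (Fin 2) ℂ) where
  carrier := {g | g.val ∈ quaternionMatrices}
  one_mem' := .inl (.inl rfl)
  mul_mem' := mul_mem_quaternionMatrices
  inv_mem' {g} hg := by
    obtain ⟨N, hN, hgN⟩ := exists_mul_eq_one_of_mem_quaternionMatrices hg
    rwa [Set.mem_ofPred_eq, Units.inv_eq_of_mul_eq_one_right hgN]

theorem mem_quaternionSubgroup {g : GL (Fin 2) ℂ} :
    g ∈ quaternionSubgroup ↔ g.val ∈ quaternionMatrices :=
  Iff.rfl

end Quaternion

/-- The generator `AMat` of `G4` as an invertible matrix. -/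
def generatorA : GL (Fin 2) ℂ :=
  GeneralLinearGroup.mkOfDetNeZero AMat (by simp [AMat, isPrimitiveRoot_ω.ne_zero])

theorem val_generatorA : generatorA.val = AMat := rfl

theorem det_generatorA_zpow (n : ℤ) : (generatorA ^ n).val.det = ω ^ n := by
  rw [← GeneralLinearGroup.val_det_apply, map_zpow, Units.val_zpow_eq_zpow_val,
    GeneralLinearGroup.val_det_apply, val_generatorA]
  simp [AMat]

theorem generatorA_pow_three : generatorA ^ 3 = 1 := by
  have hω : ω * (ω * ω) = 1 := by rw [← pow_three, isPrimitiveRoot_ω.pow_eq_one]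
  apply Units.ext
  simp [val_generatorA, AMat, pow_three, hω, one_fin_two]

theorem generatorA_conj_mem_quaternionSubgroup {g : GL (Fin 2) ℂ} (hg : g ∈ quaternionSubgroup) :
    generatorA * g * generatorA⁻¹ ∈ quaternionSubgroup := by
  suffices ∃ N ∈ quaternionMatrices, AMat * g.val = N * AMat by
    obtain ⟨N, hN, hcomm⟩ := this
    have val_eq : (generatorA * g * generatorA⁻¹).val = N := by
      rw [Units.val_mul, Units.mul_inv_eq_iff_eq_mul, Units.val_mul, val_generatorA, hcomm]
    rwa [mem_quaternionSubgroup, val_eq]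
  obtain (hone | hneg) | ⟨u, hu, hg⟩ := mem_quaternionSubgroup.mp hg
  · exact ⟨1, .inl (.inl rfl), by rw [hone, mul_one, one_mul]⟩
  · exact ⟨-1, .inl (.inr rfl), by rw [hneg, mul_neg_one, neg_one_mul]⟩
  · have hωu : (ω ^ 2 * u) ^ 6 = 1 := by
      rw [mul_pow, hu, mul_one, ← pow_mul, isPrimitiveRoot_ω.pow_eq_one_iff_dvd]
      norm_num
    exact ⟨_, quaternionUnit_mem_quaternionMatrices hωu, by rw [← hg, AMat_mul_quaternionUnit]⟩

theorem generatorA_mem_normalizer : generatorA ∈ Subgroup.normalizer quaternionSubgroup :=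
  mem_normalizer_of_isOfFinOrder
    (isOfFinOrder_iff_pow_eq_one.mpr ⟨3, by norm_num, generatorA_pow_three⟩)
    fun _ => generatorA_conj_mem_quaternionSubgroup

theorem G4_le_quaternionSubgroup_sup_zpowers :
    G4 ≤ quaternionSubgroup ⊔ Subgroup.zpowers generatorA := by
  have hA : generatorA ∈ quaternionSubgroup ⊔ Subgroup.zpowers generatorA :=
    Subgroup.mem_sup_right (Subgroup.mem_zpowers generatorA)
  refine (Subgroup.closure_le _).mpr ?_
  rintro g (hg | hg)
  · rwa [show g = generatorA from Units.ext hg]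
  · have val_eq : (g * generatorA⁻¹).val = quaternionUnit ω := by
      rw [Units.val_mul, Units.mul_inv_eq_iff_eq_mul, hg, val_generatorA,
        BMat_eq_quaternionUnit_mul_AMat]
    have hω : ω ^ 6 = 1 := by
      rw [isPrimitiveRoot_ω.pow_eq_one_iff_dvd]
      norm_num
    have hmem : g * generatorA⁻¹ ∈ quaternionSubgroup := by
      rw [mem_quaternionSubgroup, val_eq]
      exact quaternionUnit_mem_quaternionMatrices hω
    simpa using mul_mem (Subgroup.mem_sup_left hmem) hA

theorem exists_mat_eq_mul_generatorA_zpow (g : G4) :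
    ∃ M ∈ quaternionMatrices, ∃ n : ℤ, mat g = M * (generatorA ^ n).val := by
  have hg := G4_le_quaternionSubgroup_sup_zpowers g.2
  rw [← SetLike.mem_coe, Subgroup.coe_mul_of_right_le_normalizer_left _ _
    (Subgroup.zpowers_le.mpr generatorA_mem_normalizer)] at hg
  obtain ⟨q, hq, _, ⟨n, rfl⟩, hqn⟩ := hg
  exact ⟨q.val, hq, n, by rw [mat, ← hqn]; rfl⟩

theorem mat_det_pow_three (g : G4) : (mat g).det ^ 3 = 1 := by
  obtain ⟨M, hM, n, hg⟩ := exists_mat_eq_mul_generatorA_zpow g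
  rw [hg, det_mul, det_of_mem_quaternionMatrices hM, one_mul, det_generatorA_zpow, ← zpow_natCast,
    zpow_comm, zpow_natCast, isPrimitiveRoot_ω.pow_eq_one, _root_.one_zpow]

theorem mat_mem_quaternionMatrices_of_det_eq_one {g : G4} (hdet : (mat g).det = 1) :
    mat g ∈ quaternionMatrices := by
  obtain ⟨M, hM, n, hg⟩ := exists_mat_eq_mul_generatorA_zpow g
  rw [hg, det_mul, det_of_mem_quaternionMatrices hM, one_mul, det_generatorA_zpow,
    isPrimitiveRoot_ω.zpow_eq_one_iff_dvd] at hdet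
  obtain ⟨m, rfl⟩ := hdet
  rwa [hg, _root_.zpow_mul, zpow_natCast, generatorA_pow_three, _root_.one_zpow, Units.val_one,
    mul_one]

theorem IsCoxeter.det_ne_one {c : G4} (hc : IsCoxeter c) : (mat c).det ≠ 1 := by
  obtain ⟨ζ, hζ, hdet⟩ := hc
  intro h
  exact hζ.pow_ne_one_of_pos_of_lt (by norm_num) (by norm_num)
    (eigenvalue_pow_four_eq_one_of_mem_quaternionMatrices
      (mat_mem_quaternionMatrices_of_det_eq_one h) hdet)

theorem IsReflection.det_ne_one {t : G4} (ht : IsReflection t) : (mat t).det ≠ 1 := fun h =>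
  ht.1 <| Subtype.ext <| Units.ext <|
    eq_one_of_mem_quaternionMatrices_of_det_sub_one_eq_zero
      (mat_mem_quaternionMatrices_of_det_eq_one h) ht.2

theorem IsReflection.mem_R1_or_mem_R2 {t : G4} (ht : IsReflection t) : t ∈ R1 ∨ t ∈ R2 := by
  obtain ⟨i, hi, hdet⟩ := isPrimitiveRoot_ω.eq_pow_of_pow_eq_one (mat_det_pow_three t)
  interval_cases i
  · exact absurd (by simpa using hdet.symm) ht.det_ne_one
  · exact .inl ⟨ht, by simpa using hdet.symm⟩
  · exact .inr ⟨ht, hdet.symm⟩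

theorem IsReflection.notMem_R1_iff {t : G4} (ht : IsReflection t) : t ∉ R1 ↔ t ∈ R2 :=
  ⟨ht.mem_R1_or_mem_R2.resolve_left, fun h2 h1 => ω_ne_ω_sq (h1.2.symm.trans h2.2)⟩

theorem det_mat_prod_ofFn {k : ℕ} (t : Fin k → G4) :
    (mat (List.ofFn t).prod).det = ∏ i, (mat (t i)).det := by
  let detHom : G4 →* ℂ :=
    (detMonoidHom.comp (Units.coeHom (Matrix (Fin 2) (Fin 2) ℂ))).comp G4.subtype
  change detHom (List.ofFn t).prod = ∏ i, detHom (t i)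
  rw [map_list_prod, List.map_ofFn, List.prod_ofFn]
  rfl

section ClassCounts

variable {k : ℕ} {t : Fin k → G4}

theorem ncard_R1_add_ncard_R2 (ht : ∀ i, IsReflection (t i)) :
    {i | t i ∈ R1}.ncard + {i | t i ∈ R2}.ncard = k := by
  have hcompl : {i | t i ∈ R2} = {i | t i ∈ R1}ᶜ := Set.ext fun i => (ht i).notMem_R1_iff.symm
  rw [hcompl, Set.ncard_add_ncard_compl, Nat.card_fin]

theorem det_mat_prod_eq_ω_pow (ht : ∀ i, IsReflection (t i)) :
    (mat (List.ofFn t).prod).det = ω ^ ({i | t i ∈ R1}.ncard + 2 * {i | t i ∈ R2}.ncard) := by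
  rw [det_mat_prod_ofFn, prod_eq_pow_ncard_mul_pow_ncard (t · ∈ R1) (fun _ h1 => h1.2)
    fun i h1 => ((ht i).notMem_R1_iff.mp h1).2, ← pow_mul, ← pow_add]
  simp only [(ht _).notMem_R1_iff]

theorem det_mat_prod_eq_one_iff (ht : ∀ i, IsReflection (t i)) :
    (mat (List.ofFn t).prod).det = 1 ↔
      {i | t i ∈ R1}.ncard ≡ {i | t i ∈ R2}.ncard [MOD 3] := by
  rw [det_mat_prod_eq_ω_pow ht, isPrimitiveRoot_ω.pow_eq_one_iff_dvd, Nat.ModEq]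
  omega

end ClassCounts

theorem g4_class_distribution_general {c : G4} (hc : (mat c).det ≠ 1) :
    (∀ t : Fin 3 → G4, (∀ i, IsReflection (t i)) → (List.ofFn t).prod = c →
      (∃ i, t i ∈ R1) ∧ (∃ i, t i ∈ R2)) ∧
    (∀ k : ℕ, 4 ≤ k → ∀ t : Fin k → G4, (∀ i, IsReflection (t i)) → (List.ofFn t).prod = c →
      3 ≤ {i : Fin k | t i ∈ R1}.ncard ∨ 3 ≤ {i : Fin k | t i ∈ R2}.ncard) := by
  have counts {k : ℕ} {t : Fin k → G4} (ht : ∀ i, IsReflection (t i))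
      (hprod : (List.ofFn t).prod = c) :
      {i | t i ∈ R1}.ncard + {i | t i ∈ R2}.ncard = k ∧
        {i | t i ∈ R1}.ncard % 3 ≠ {i | t i ∈ R2}.ncard % 3 :=
    ⟨ncard_R1_add_ncard_R2 ht, fun h => hc (hprod ▸ (det_mat_prod_eq_one_iff ht).mpr h)⟩
  refine ⟨fun t ht hprod => ?_, fun k hk t ht hprod => ?_⟩
  · obtain ⟨hsum, hmod⟩ := counts ht hprod
    exact ⟨Set.nonempty_of_ncard_ne_zero (s := {i | t i ∈ R1}) (by omega),
      Set.nonempty_of_ncard_ne_zero (s := {i | t i ∈ R2}) (by omega)⟩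
  · obtain ⟨hsum, hmod⟩ := counts ht hprod
    by_contra! hlt
    omega

theorem g4_class_distribution :
    (∀ c : G4, IsCoxeter c → ∀ t : Fin 3 → G4, (∀ i, IsReflection (t i)) →
      (List.ofFn t).prod = c → (∃ i, t i ∈ R1) ∧ (∃ i, t i ∈ R2)) ∧
    (∀ k : ℕ, 4 ≤ k → ∀ c : G4, IsCoxeter c → ∀ t : Fin k → G4,
      (∀ i, IsReflection (t i)) → (List.ofFn t).prod = c →
      3 ≤ {i : Fin k | t i ∈ R1}.ncard ∨ 3 ≤ {i : Fin k | t i ∈ R2}.ncard) :=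
  ⟨fun _ hc => (g4_class_distribution_general hc.det_ne_one).1,
    fun k hk _ hc => (g4_class_distribution_general hc.det_ne_one).2 k hk⟩
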